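/- For every convex body K in R^d there exist constants n_0, c_1, c_2 > 0 depending only on d such that for all n ≥ n_0, c_1 < n^{2/(d-1)} · (p(n,K))^{1/n} < c_2. -/

import Mathlib

open MeasureTheory Set Filter
noncomputable section

/-- Euclidean space `ℝ^d`. -/
abbrev E (d : ℕ) := EuclideanSpace ℝ (Fin d)

/-- A set of points is in convex position if no point lies in the convex hull of the others. -/
def ConvexPosition {d : ℕ} (X : Set (E d)) : Prop :=
  ∀ x ∈ X, x ∉ convexHull ℝ (X \ {x})

/-- The uniform (normalized Lebesgue) measure on `K`. -/
def unifOn (d : ℕ) (K : Set (E d)) : Measure (E d) :=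
  (volume K)⁻¹ • volume.restrict K

/-- The distribution of `n` independent uniform points in `K`. -/
def sampleMeasure (d n : ℕ) (K : Set (E d)) : Measure (Fin n → E d) :=
  Measure.pi fun _ => unifOn d K

/-- `p(n,K)`: probability that `n` i.i.d. uniform points in `K` are in convex position. -/
def pConvex (d n : ℕ) (K : Set (E d)) : ℝ :=
  (sampleMeasure d n K {x | ConvexPosition (Set.range x)}).toReal

/-!
An affine map of maximal determinant places `K` between the corner simplex and the cube `[-1, 1]^d`,
and `p(n, K)` is affine invariant; so all constants can be chosen to depend on `d` only. Write
`q = n^{1/(d-1)}`.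

*Lower bound.* Above each of at least `n` lattice cells of side of order `1 / q`, put a cell of
height of order `1 / q ^ 2` on top of a paraboloid inside the simplex. A tangent hyperplane of the
paraboloid, slightly raised, strictly separates each cell from all the others, so that `n` points in
distinct cells are in convex position. The cells have volume of order `1 / q ^ (d + 1)`, hence
`p(n, K) ≥ n! (c / q ^ (d + 1)) ^ n`, and `n! ≥ (n / e) ^ n = (q ^ (d - 1) / e) ^ n`.

*Upper bound.* Attach to a convex body `L ⊆ [-1, 1]^d` the squared distances to `L` of the points of
a grid of mesh `1 / m` on the boundary of `[-2, 2]^d`, rounded to multiples of `1 / m ^ 2`. Along a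
grid line the squared distance has second differences between `0` and `2 / m ^ 2`, so the rounded
values have boundedly many second differences, and at most `B ^ (m ^ (d - 1))` codes arise. Two
bodies with the same code are within `O(1 / m ^ 2)` of each other. Consequently the boundary points
of all bodies with a given code lie in one set which at each of its points has a supporting
hyperplane up to an error `O(1 / m ^ 2)`, and such a set has volume `O(1 / m ^ 2)`. Points in convex
position are boundary points of their convex hull, so a union bound over the codes gives
`p(n, K) ≤ B ^ (m ^ (d - 1)) (V / m ^ 2) ^ n`; take `m` of order `q`.
-/

section InnerProductSpace

open scoped InnerProductSpace

variable {F : Type*} [NormedAddCommGroup F]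

lemma convexOn_infDist [NormedSpace ℝ F] {L : Set F} (hL : Convex ℝ L) :
    ConvexOn ℝ univ (Metric.infDist · L) := by
  refine ⟨convex_univ, fun x _ y _ a b ha hb hab => ?_⟩
  rcases L.eq_empty_or_nonempty with rfl | hne
  · simp
  refine le_of_forall_pos_le_add fun ε hε => ?_
  obtain ⟨p, hp, hxp⟩ := (Metric.infDist_lt_iff hne).1 (lt_add_of_pos_right (Metric.infDist x L) hε)
  obtain ⟨q, hq, hyq⟩ := (Metric.infDist_lt_iff hne).1 (lt_add_of_pos_right (Metric.infDist y L) hε)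
  rw [dist_eq_norm] at hxp hyq
  calc Metric.infDist (a • x + b • y) L
      ≤ dist (a • x + b • y) (a • p + b • q) :=
        Metric.infDist_le_dist_of_mem (hL hp hq ha hb hab)
    _ = ‖a • (x - p) + b • (y - q)‖ := by rw [dist_eq_norm]; congr 1; module
    _ ≤ a * ‖x - p‖ + b * ‖y - q‖ := by
        simpa [norm_smul, abs_of_nonneg ha, abs_of_nonneg hb] using
          norm_add_le (a • (x - p)) (b • (y - q))
    _ ≤ a * (Metric.infDist x L + ε) + b * (Metric.infDist y L + ε) := by gcongr
    _ = a • Metric.infDist x L + b • Metric.infDist y L + ε := by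
        simp only [smul_eq_mul]; linear_combination ε * hab

lemma two_mul_infDist_sq_le [NormedSpace ℝ F] {L : Set F} (hL : Convex ℝ L) (z h : F) :
    2 * Metric.infDist z L ^ 2 ≤ Metric.infDist (z + h) L ^ 2 + Metric.infDist (z - h) L ^ 2 := by
  have hsq := (convexOn_infDist hL).pow (fun _ _ => Metric.infDist_nonneg) 2
  have hconv := hsq.2 (mem_univ (z + h)) (mem_univ (z - h)) (by norm_num : (0 : ℝ) ≤ 1 / 2)
    (by norm_num : (0 : ℝ) ≤ 1 / 2) (by norm_num)
  have hmid : (1 / 2 : ℝ) • (z + h) + (1 / 2 : ℝ) • (z - h) = z := by module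
  simp only [Pi.pow_apply, hmid, smul_eq_mul] at hconv
  linarith

lemma exists_one_le_norm_add_smul_eq [NormedSpace ℝ F] {y u : F} {r : ℝ} (hr : 0 ≤ r)
    (hy : ‖y‖ ≤ r) (hu₀ : u ≠ 0) (hu₁ : ‖u‖ ≤ 1) : ∃ t : ℝ, 1 ≤ t ∧ ‖y + t • u‖ = r + 1 := by
  have hu : 0 < ‖u‖ := norm_pos_iff.2 hu₀
  set T : ℝ := (2 * r + 1) / ‖u‖
  have hT : ‖T • u‖ = 2 * r + 1 := by
    rw [norm_smul, Real.norm_of_nonneg (by positivity), div_mul_cancel₀ _ hu.ne']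
  have hT₁ : 1 ≤ T := (one_le_div hu).2 (by linarith)
  have hstart : ‖y + (1 : ℝ) • u‖ ≤ r + 1 := by
    rw [one_smul]; linarith [norm_add_le y u]
  have hend : r + 1 ≤ ‖y + T • u‖ := by
    have := norm_sub_le (y + T • u) y
    rw [add_sub_cancel_left, hT] at this
    linarith
  obtain ⟨t, ht, hnorm⟩ := intermediate_value_Icc hT₁
    (f := fun t : ℝ => ‖y + t • u‖) (by fun_prop) ⟨hstart, hend⟩
  exact ⟨t, ht.1, hnorm⟩

variable [InnerProductSpace ℝ F]

lemma infDist_sq_add_infDist_sq_le (L : Set F) (z h : F) :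
    Metric.infDist (z + h) L ^ 2 + Metric.infDist (z - h) L ^ 2 ≤
      2 * Metric.infDist z L ^ 2 + 2 * ‖h‖ ^ 2 := by
  rcases L.eq_empty_or_nonempty with rfl | hne
  · simp only [Metric.infDist_empty]; nlinarith [sq_nonneg ‖h‖]
  set c := (Metric.infDist (z + h) L ^ 2 + Metric.infDist (z - h) L ^ 2) / 2 - ‖h‖ ^ 2
  have hc : ∀ p ∈ L, c ≤ dist z p ^ 2 := fun p hp => by
    have hadd : Metric.infDist (z + h) L ^ 2 ≤ ‖(z - p) + h‖ ^ 2 := by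
      rw [sub_add_eq_add_sub, ← dist_eq_norm]
      exact pow_le_pow_left₀ Metric.infDist_nonneg (Metric.infDist_le_dist_of_mem hp) 2
    have hsub : Metric.infDist (z - h) L ^ 2 ≤ ‖(z - p) - h‖ ^ 2 := by
      rw [sub_right_comm, ← dist_eq_norm]
      exact pow_le_pow_left₀ Metric.infDist_nonneg (Metric.infDist_le_dist_of_mem hp) 2
    have hpar := parallelogram_law_with_norm ℝ (z - p) h
    rw [dist_eq_norm]
    simp only [c]
    nlinarith
  have hsqrt : √c ≤ Metric.infDist z L :=
    (Metric.le_infDist hne).2 fun {p} hp => Real.sqrt_le_left dist_nonneg |>.2 (hc p hp)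
  have := (Real.sqrt_le_left Metric.infDist_nonneg).1 hsqrt
  simp only [c] at this
  linarith

/-- `u` is a unit vector in the normal cone of `L` at `x`. -/
def IsOuterUnitNormal (L : Set F) (x u : F) : Prop :=
  ‖u‖ = 1 ∧ ∀ y ∈ L, ⟪y - x, u⟫_ℝ ≤ 0

lemma IsOuterUnitNormal.convexHull {X : Set F} {x u : F} (hu : IsOuterUnitNormal X x u) :
    IsOuterUnitNormal (convexHull ℝ X) x u := by
  have hhalf : Convex ℝ {y : F | ⟪u, y⟫_ℝ ≤ ⟪u, x⟫_ℝ} :=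
    convex_halfSpace_le (innerₛₗ ℝ u).isLinear _
  have hiff (y : F) : ⟪y - x, u⟫_ℝ ≤ 0 ↔ ⟪u, y⟫_ℝ ≤ ⟪u, x⟫_ℝ := by
    rw [real_inner_comm, inner_sub_right, sub_nonpos]
  exact ⟨hu.1, fun y hy => (hiff y).2 <|
    convexHull_min (fun z hz => (hiff z).1 (hu.2 z hz)) hhalf hy⟩

lemma IsOuterUnitNormal.inner_sub_le_infDist {L : Set F} {x u : F} (hu : IsOuterUnitNormal L x u)
    (hL : L.Nonempty) (z : F) : ⟪z - x, u⟫_ℝ ≤ Metric.infDist z L := by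
  refine (Metric.le_infDist hL).2 fun {y} hy => ?_
  calc ⟪z - x, u⟫_ℝ = ⟪z - y, u⟫_ℝ + ⟪y - x, u⟫_ℝ := by
        rw [← inner_add_left, sub_add_sub_cancel]
    _ ≤ ‖z - y‖ * ‖u‖ + 0 := add_le_add (real_inner_le_norm _ _) (hu.2 y hy)
    _ = dist z y := by rw [hu.1, mul_one, add_zero, dist_eq_norm]

lemma exists_isOuterUnitNormal_of_notMem {L : Set F} (hcomplete : IsComplete L)
    (hconvex : Convex ℝ L) (hL : L.Nonempty) {y : F} (hy : y ∉ L) :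
    ∃ p ∈ L, ∃ u, IsOuterUnitNormal L p u ∧ y - p = ‖y - p‖ • u := by
  obtain ⟨p, hp, hmin⟩ := exists_norm_eq_iInf_of_complete_convex hL hcomplete hconvex y
  have hobtuse := (norm_eq_iInf_iff_real_inner_le_zero hconvex hp).1 hmin
  have hne : ‖y - p‖ ≠ 0 := norm_ne_zero_iff.2 <| sub_ne_zero.2 fun h => hy (h ▸ hp)
  refine ⟨p, hp, ‖y - p‖⁻¹ • (y - p), ⟨norm_smul_inv_norm (norm_ne_zero_iff.1 hne), ?_⟩,
    (smul_inv_smul₀ hne _).symm⟩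
  intro w hw
  rw [real_inner_smul_right, real_inner_comm]
  exact mul_nonpos_of_nonneg_of_nonpos (by positivity) (hobtuse w hw)

lemma exists_isOuterUnitNormal_of_notMem_convexHull [Nontrivial F] {X : Set F} (hX : X.Finite)
    {x : F} (hx : x ∉ convexHull ℝ (X \ {x})) : ∃ u, IsOuterUnitNormal X x u := by
  rcases (X \ {x}).eq_empty_or_nonempty with hsub | hne
  · obtain ⟨u, hu⟩ := exists_norm_eq F zero_le_one
    refine ⟨u, hu, fun y hy => ?_⟩
    obtain rfl : y = x := sdiff_eq_empty.1 hsub hy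
    simp
  obtain ⟨p, -, u, hu, hxp⟩ := exists_isOuterUnitNormal_of_notMem
    (hX.sdiff.isCompact_convexHull (𝕜 := ℝ)).isComplete (convex_convexHull ℝ _)
    hne.convexHull hx
  refine ⟨u, hu.1, fun y hy => ?_⟩
  by_cases hyx : y = x
  · simp [hyx]
  calc ⟪y - x, u⟫_ℝ = ⟪y - p, u⟫_ℝ - ⟪x - p, u⟫_ℝ := by
        rw [← inner_sub_left, sub_sub_sub_cancel_right]
    _ ≤ 0 - ‖x - p‖ := by
        refine sub_le_sub (hu.2 y (subset_convexHull ℝ _ ⟨hy, hyx⟩)) (le_of_eq ?_)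
        conv_rhs => rw [hxp, real_inner_smul_left, real_inner_self_eq_norm_sq, hu.1]
        ring
    _ ≤ 0 := by linarith [norm_nonneg (x - p)]

lemma IsOuterUnitNormal.le_norm_sq_add_infDist_sq_sub {L : Set F} {p u : F}
    (hu : IsOuterUnitNormal L p u) (hL : L.Nonempty) {s t : ℝ} (hs : 0 ≤ s) (ht : 1 ≤ t) {h : F}
    (hh : ‖h‖ ≤ 1 / 2) :
    s ≤ ‖h‖ ^ 2 + Metric.infDist (p + s • u + t • u + h) L ^ 2 - ‖t • u + h‖ ^ 2 := by
  set q := ⟪h, u⟫_ℝ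
  have huu : ⟪u, u⟫_ℝ = 1 := by rw [real_inner_self_eq_norm_sq, hu.1, one_pow]
  have hq_abs : |q| ≤ 1 / 2 := by
    have := abs_real_inner_le_norm h u
    rw [hu.1, mul_one] at this
    exact this.trans hh
  have hq_lower : -(1 / 2) ≤ q := (abs_le.1 hq_abs).1
  have hdist : q + (s + t) ≤ Metric.infDist (p + s • u + t • u + h) L := by
    refine le_of_eq_of_le ?_ (hu.inner_sub_le_infDist hL _)
    rw [show p + s • u + t • u + h - p = h + (s + t) • u by module, inner_add_left,
      real_inner_smul_left, huu, mul_one]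
  have hdist_sq := pow_le_pow_left₀ (by linarith) hdist 2
  have hnorm : ‖t • u + h‖ ^ 2 = ‖h‖ ^ 2 + 2 * t * q + t ^ 2 := by
    rw [add_comm, norm_add_sq_real, real_inner_smul_right, norm_smul, hu.1, mul_one,
      Real.norm_eq_abs, sq_abs]
    ring
  have hgain : s * 1 ≤ s * (2 * t + 2 * q) := by gcongr; linarith
  nlinarith [sq_nonneg q, sq_nonneg s]

-- At a point of the outward normal ray through `y`, the squared distance to `L` exceeds that to `y`
-- by at least the distance from `y` to `L`, so errors in the squares enter without a square root.
lemma infDist_le_of_infDist_sq_le {L D : Set F} (hcomplete : IsComplete L) (hconvex : Convex ℝ L)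
    (hL : L.Nonempty) {y : F} {η ε : ℝ} (hη₀ : 0 ≤ η) (hη : η ≤ 1 / 4) (hε : 0 ≤ ε)
    (hD : ∀ u : F, ‖u‖ = 1 → ∃ t : ℝ, 1 ≤ t ∧ ∃ z ∈ D, ‖z - (y + t • u)‖ ^ 2 ≤ η)
    (hdist : ∀ z ∈ D, Metric.infDist z L ^ 2 ≤ ‖z - y‖ ^ 2 + ε) :
    Metric.infDist y L ≤ η + ε := by
  by_cases hy : y ∈ L
  · rw [Metric.infDist_zero_of_mem hy]; positivity
  obtain ⟨p, hp, u, hu, hyp⟩ := exists_isOuterUnitNormal_of_notMem hcomplete hconvex hL hy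
  obtain ⟨t, ht, z, hz, hnear⟩ := hD u hu.1
  set h := z - (y + t • u) with hh
  have hhalf : ‖h‖ ≤ 1 / 2 := le_of_sq_le_sq (by linarith) (by norm_num)
  have hstep := hu.le_norm_sq_add_infDist_sq_sub hL (norm_nonneg (y - p)) ht hhalf
  rw [← hyp, show p + (y - p) + t • u + h = z by rw [hh]; abel,
    show t • u + h = z - y by rw [hh]; abel] at hstep
  calc Metric.infDist y L ≤ ‖y - p‖ := dist_eq_norm y p ▸ Metric.infDist_le_dist_of_mem hp
    _ ≤ η + ε := by linarith [hdist z hz]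

end InnerProductSpace

section Normalization

open scoped Topology

/-- The cube `[-r, r]^d`, for `0 ≤ r`: the closed ball of radius `r` for the sup norm. -/
def cube (d : ℕ) (r : ℝ) : Set (E d) :=
  WithLp.ofLp ⁻¹' Metric.closedBall 0 r

/-- The convex hull of the origin and of the standard basis vectors of `ℝ^d`. -/
def cornerSimplex (d : ℕ) : Set (E d) :=
  {x | (∀ i, 0 ≤ x i) ∧ ∑ i, x i ≤ 1}

/-- A body is normalized if it lies between the standard corner simplex and the cube
`[-1, 1]^d`. Every convex body has a normalized affine image, and so it suffices to treat
normalized bodies. -/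
def IsNormalized {d : ℕ} (K : Set (E d)) : Prop :=
  cornerSimplex d ⊆ K ∧ K ⊆ cube d 1

variable {d : ℕ} {K : Set (E d)}

lemma mem_cube {r : ℝ} (hr : 0 ≤ r) {x : E d} : x ∈ cube d r ↔ ∀ i, |x i| ≤ r := by
  rw [cube, mem_preimage, mem_closedBall_zero_iff, pi_norm_le_iff_of_nonneg hr]
  rfl

lemma convex_cube (r : ℝ) : Convex ℝ (cube d r) :=
  (convex_closedBall _ _).linear_preimage (WithLp.linearEquiv 2 ℝ (Fin d → ℝ)).toLinearMap

lemma isClosed_cube {r : ℝ} : IsClosed (cube d r) :=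
  Metric.isClosed_closedBall.preimage (PiLp.continuous_ofLp 2 _)

lemma volume_cube {r : ℝ} (hr : 0 ≤ r) : volume (cube d r) = ENNReal.ofReal ((2 * r) ^ d) := by
  have hvol := (EuclideanSpace.volume_preserving_symm_measurableEquiv_toLp (Fin d)).measure_preimage
    (s := Metric.closedBall 0 r) Metric.isClosed_closedBall.measurableSet.nullMeasurableSet
  rw [Real.volume_pi_closedBall _ hr, Fintype.card_fin] at hvol
  exact hvol

lemma cornerSimplex_subset (hK : Convex ℝ K) (h₀ : 0 ∈ K)
    (h₁ : ∀ i, EuclideanSpace.single i 1 ∈ K) : cornerSimplex d ⊆ K := by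
  rintro x ⟨hx, hsum⟩
  have hmem := hK.sum_mem (t := (Finset.univ : Finset (Option (Fin d))))
    (w := fun o => o.elim (1 - ∑ i, x i) x)
    (z := fun o => o.elim 0 fun i => EuclideanSpace.single i 1)
    (by rintro (_ | i) -; exacts [sub_nonneg.2 hsum, hx i])
    (by simp [Fintype.sum_option])
    (by rintro (_ | i) -; exacts [h₀, h₁ i])
  convert hmem
  ext j
  simp [Fintype.sum_option, Pi.single_apply]

-- A basis in `K` of maximal determinant: replacing one of its vectors by a point `x` of `K`
-- multiplies the determinant by a coordinate of `x`.
lemma exists_basis_mem_abs_repr_le_one {ι V : Type*} [Finite ι] [NormedAddCommGroup V]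
    [NormedSpace ℝ V] (b : Module.Basis ι ℝ V) {K : Set V} (hK : IsCompact K) (h₀ : K ∈ 𝓝 0) :
    ∃ e : Module.Basis ι ℝ V, (∀ i, e i ∈ K) ∧ ∀ x ∈ K, ∀ i, |e.repr x i| ≤ 1 := by
  classical
  cases nonempty_fintype ι
  have := Module.Finite.of_basis b
  have hcont : Continuous fun w : ι → V => |b.det w| := by
    simp only [Module.Basis.det_apply]
    exact (Continuous.matrix_det <| continuous_matrix fun i j =>
      (b.coord i).continuous_of_finiteDimensional.comp (continuous_apply j)).abs
  obtain ⟨w, hwK, hmax⟩ := (isCompact_univ_pi fun _ : ι => hK).exists_isMaxOn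
    ⟨0, fun _ _ => mem_of_mem_nhds h₀⟩ hcont.continuousOn
  have hdet : b.det w ≠ 0 := by
    have hsmall : ∀ᶠ r in 𝓝[≠] (0 : ℝ), ∀ i, r • b i ∈ K := by
      refine eventually_all.2 fun i => nhdsWithin_le_nhds ?_
      exact (by fun_prop : ContinuousAt (fun r : ℝ => r • b i) 0).eventually_mem (by simpa using h₀)
    obtain ⟨r, hrK, hr⟩ := (hsmall.and eventually_mem_nhdsWithin).exists
    have hle : |b.det fun i => r • b i| ≤ |b.det w| := hmax fun i _ => hrK i
    rw [AlternatingMap.map_smul_univ b.det (fun _ => r) b, b.det_self] at hle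
    refine abs_pos.1 (lt_of_lt_of_le (abs_pos.2 ?_) hle)
    simpa using pow_ne_zero _ hr
  obtain ⟨hli, hspan⟩ := (b.is_basis_iff_det).2 (isUnit_iff_ne_zero.2 hdet)
  refine ⟨Module.Basis.mk hli hspan.ge, fun i => by simpa using hwK i trivial, fun x hx i => ?_⟩
  have hupdate : b.det w * (Module.Basis.mk hli hspan.ge).repr x i =
      b.det (Function.update w i x) :=
    congrArg (· x) (b.det_smul_mk_coord_eq_det_update hli hspan.ge i)
  have hle : |b.det (Function.update w i x)| ≤ |b.det w| :=
    hmax ((update_mem_pi_iff_of_mem hwK).2 fun _ => hx)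
  rw [← hupdate, abs_mul] at hle
  exact le_of_mul_le_mul_left (hle.trans_eq (mul_one _).symm) (abs_pos.2 hdet)

lemma exists_isNormalized_image (hK : IsCompact K) (hconvex : Convex ℝ K)
    (hint : (interior K).Nonempty) : ∃ φ : E d ≃ᵃ[ℝ] E d, IsNormalized (φ '' K) := by
  obtain ⟨v, hv⟩ := hint
  obtain ⟨e, heK, hrepr⟩ := exists_basis_mem_abs_repr_le_one
    (EuclideanSpace.basisFun (Fin d) ℝ).toBasis (K := (· - v) '' K)
    (hK.image (by fun_prop)) (by
      simpa using (Homeomorph.subRight v).isOpenMap.image_mem_nhds (mem_interior_iff_mem_nhds.1 hv))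
  let φ : E d ≃ᵃ[ℝ] E d := (AffineEquiv.vaddConst ℝ v).symm.trans
    (e.equivFun.trans (WithLp.linearEquiv 2 ℝ (Fin d → ℝ)).symm).toAffineEquiv
  have hφ (x : E d) (i : Fin d) : φ x i = e.repr (x - v) i := rfl
  refine ⟨φ, cornerSimplex_subset (hconvex.affine_image φ.toAffineMap) ?_ fun i => ?_, ?_⟩
  · exact ⟨v, interior_subset hv, by ext; simp [hφ]⟩
  · obtain ⟨x, hx, hxe⟩ := heK i
    refine ⟨x, hx, ?_⟩
    ext j
    change φ x j = _
    simp [hφ, hxe, Finsupp.single_apply, eq_comm]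
  · rintro _ ⟨x, hx, rfl⟩
    exact (mem_cube zero_le_one).2 fun i => hrepr _ ⟨x, hx, rfl⟩ i

end Normalization

section UniformDistribution

variable {d n : ℕ} {K : Set (E d)}

lemma volume_image_affineEquiv (φ : E d ≃ᵃ[ℝ] E d) (S : Set (E d)) :
    volume (φ '' S) = ENNReal.ofReal |LinearMap.det (φ.linear : E d →ₗ[ℝ] E d)| * volume S := by
  have himage : φ '' S = (· + φ 0) '' ((φ.linear : E d →ₗ[ℝ] E d) '' S) := by
    rw [image_image]
    exact image_congr fun x _ => by simpa using φ.map_vadd 0 x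
  rw [himage, image_add_right, measure_preimage_add_right, Measure.addHaar_image_linearMap]

lemma unifOn_image_affineEquiv (φ : E d ≃ᵃ[ℝ] E d) (K : Set (E d)) :
    unifOn d (φ '' K) = (unifOn d K).map φ := by
  have hφ : Measurable φ := φ.toAffineMap.continuous_of_finiteDimensional.measurable
  have hdet : ENNReal.ofReal |LinearMap.det (φ.linear : E d →ₗ[ℝ] E d)| ≠ 0 := by
    simpa using φ.linear.isUnit_det'.ne_zero
  ext S hS
  rw [Measure.map_apply hφ hS]
  simp only [unifOn, Measure.smul_apply, smul_eq_mul]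
  rw [Measure.restrict_apply hS, Measure.restrict_apply (hφ hS), ← image_preimage_inter,
    volume_image_affineEquiv, volume_image_affineEquiv, mul_comm, ← div_eq_mul_inv,
    ENNReal.mul_div_mul_left _ _ hdet ENNReal.ofReal_ne_top, ENNReal.div_eq_inv_mul]

lemma convexPosition_image_affineEquiv (φ : E d ≃ᵃ[ℝ] E d) {X : Set (E d)} :
    ConvexPosition (φ '' X) ↔ ConvexPosition X := by
  have hhull (x : E d) : φ '' convexHull ℝ (X \ {x}) = convexHull ℝ (φ '' X \ {φ x}) := by
    rw [← image_singleton, ← image_sdiff φ.injective]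
    exact φ.toAffineMap.image_convexHull _
  simp only [ConvexPosition, forall_mem_image, ← hhull, φ.injective.mem_set_image]

lemma pConvex_image_affineEquiv (φ : E d ≃ᵃ[ℝ] E d) [SigmaFinite (unifOn d K)] :
    pConvex d n (φ '' K) = pConvex d n K := by
  let ψ : E d ≃ᵐ E d :=
    (AffineEquiv.toContinuousAffineEquiv φ).toHomeomorph.toMeasurableEquiv
  have hunif : unifOn d (φ '' K) = (unifOn d K).map ψ := unifOn_image_affineEquiv φ K
  have : SigmaFinite ((unifOn d K).map ψ) := ψ.sigmaFinite_map
  have hpreimage : MeasurableEquiv.piCongrRight (fun _ : Fin n => ψ) ⁻¹'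
      {x | ConvexPosition (range x)} = {x | ConvexPosition (range x)} := by
    ext x
    have hrange : range (fun i => ψ (x i)) = φ '' range x := range_comp φ x
    change ConvexPosition (range fun i => ψ (x i)) ↔ ConvexPosition (range x)
    rw [hrange, convexPosition_image_affineEquiv]
  rw [pConvex, sampleMeasure, hunif, ← Measure.pi_map_pi fun _ => ψ.measurable.aemeasurable]
  change ((Measure.pi fun _ => unifOn d K).map
    (MeasurableEquiv.piCongrRight fun _ : Fin n => ψ) _).toReal = _
  rw [MeasurableEquiv.map_apply, hpreimage, pConvex, sampleMeasure]

lemma inv_pow_le_volume_cornerSimplex (d : ℕ) :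
    ENNReal.ofReal ((d : ℝ) ^ d)⁻¹ ≤ volume (cornerSimplex d) := by
  let c : E d := WithLp.toLp 2 fun _ => (2 * d : ℝ)⁻¹
  have hsub : (· + -c) ⁻¹' cube d (2 * d : ℝ)⁻¹ ⊆ cornerSimplex d := by
    intro x hx
    have hx' (i : Fin d) : |x i - (2 * d : ℝ)⁻¹| ≤ (2 * d : ℝ)⁻¹ := by
      simpa [c, sub_eq_add_neg] using (mem_cube (by positivity)).1 hx i
    refine ⟨fun i => by linarith [(abs_le.1 (hx' i)).1], ?_⟩
    calc ∑ i, x i ≤ ∑ _ : Fin d, (d : ℝ)⁻¹ := Finset.sum_le_sum fun i _ => by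
          linarith [(abs_le.1 (hx' i)).2, mul_inv (2 : ℝ) d]
      _ ≤ 1 := by simpa using mul_inv_le_one
  refine le_of_eq_of_le ?_ (measure_mono hsub)
  rw [measure_preimage_add_right, volume_cube (by positivity), mul_inv, mul_inv_cancel_left₀
    two_ne_zero, inv_pow]

lemma IsNormalized.volume_le (hK : IsNormalized K) : volume K ≤ ENNReal.ofReal (2 ^ d) := by
  simpa [volume_cube] using measure_mono (μ := volume) hK.2

lemma IsNormalized.inv_pow_le_volume (hK : IsNormalized K) :
    ENNReal.ofReal ((d : ℝ) ^ d)⁻¹ ≤ volume K :=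
  (inv_pow_le_volume_cornerSimplex d).trans (measure_mono hK.1)

lemma IsNormalized.isProbabilityMeasure_unifOn (hK : IsNormalized K) :
    IsProbabilityMeasure (unifOn d K) := by
  have hpos : (0 : ℝ) < d ^ d := mod_cast Nat.pow_self_pos
  have h₀ : volume K ≠ 0 :=
    ((ENNReal.ofReal_pos.2 (inv_pos.2 hpos)).trans_le hK.inv_pow_le_volume).ne'
  have h : volume K ≠ ⊤ := ne_top_of_le_ne_top ENNReal.ofReal_ne_top hK.volume_le
  exact ⟨by simp [unifOn, ENNReal.inv_mul_cancel h₀ h]⟩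

lemma IsNormalized.isProbabilityMeasure_sampleMeasure (hK : IsNormalized K) :
    IsProbabilityMeasure (sampleMeasure d n K) := by
  have := hK.isProbabilityMeasure_unifOn
  unfold sampleMeasure
  infer_instance

lemma exists_isNormalized_pConvex_eq (hK : IsCompact K) (hconvex : Convex ℝ K)
    (hint : (interior K).Nonempty) :
    ∃ K' : Set (E d), IsNormalized K' ∧ ∀ n, pConvex d n K' = pConvex d n K := by
  obtain ⟨φ, hφ⟩ := exists_isNormalized_image hK hconvex hint
  have := hφ.isProbabilityMeasure_unifOn
  refine ⟨φ '' K, hφ, fun n => ?_⟩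
  rw [← pConvex_image_affineEquiv φ.symm, image_image]
  simp

lemma IsNormalized.pow_mul_volume_le_unifOn (hK : IsNormalized K) {S : Set (E d)}
    (hS : S ⊆ cornerSimplex d) :
    ENNReal.ofReal ((1 / 2) ^ d) * volume S ≤ unifOn d K S := by
  have hvol : ENNReal.ofReal ((1 / 2) ^ d) ≤ (volume K)⁻¹ := by
    rw [ENNReal.le_inv_iff_le_inv, ← ENNReal.ofReal_inv_of_pos (by positivity)]
    simpa using hK.volume_le
  rw [unifOn, Measure.smul_apply, Measure.restrict_eq_self _ (hS.trans hK.1), smul_eq_mul]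
  gcongr

lemma IsNormalized.unifOn_le_pow_mul_volume (hK : IsNormalized K) (S : Set (E d)) :
    unifOn d K S ≤ ENNReal.ofReal (d ^ d) * volume S := by
  have hpos : (0 : ℝ) < d ^ d := mod_cast Nat.pow_self_pos
  have hvol : (volume K)⁻¹ ≤ ENNReal.ofReal (d ^ d) := by
    rw [ENNReal.inv_le_iff_inv_le, ← ENNReal.ofReal_inv_of_pos hpos]
    exact hK.inv_pow_le_volume
  rw [unifOn, Measure.smul_apply, smul_eq_mul]
  gcongr
  exact Measure.restrict_le_self

end UniformDistribution

section Roots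

lemma exists_one_le_pow_eq_natCast {k n : ℕ} (hk : k ≠ 0) (hn : n ≠ 0) :
    ∃ q : ℝ, 1 ≤ q ∧ q ^ k = n ∧ (n : ℝ) ^ (2 / k : ℝ) = q ^ 2 := by
  have hn₀ : (0 : ℝ) ≤ n := n.cast_nonneg
  refine ⟨(n : ℝ) ^ (k : ℝ)⁻¹, ?_, Real.rpow_inv_natCast_pow hn₀ hk, ?_⟩
  · exact Real.one_le_rpow (mod_cast Nat.one_le_iff_ne_zero.2 hn) (by positivity)
  · rw [← Real.rpow_mul_natCast hn₀, div_eq_inv_mul, Nat.cast_ofNat]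

variable {a b p : ℝ} {n : ℕ}

lemma le_mul_rpow_of_div_pow_le (ha : 0 ≤ a) (hb : 0 < b) (hn : n ≠ 0) (h : (a / b) ^ n ≤ p) :
    a ≤ b * p ^ (1 / n : ℝ) := by
  rw [mul_comm, ← div_le_iff₀ hb, one_div, ← Real.pow_rpow_inv_natCast (div_nonneg ha hb.le) hn]
  gcongr

lemma mul_rpow_le_of_le_div_pow (ha : 0 ≤ a) (hb : 0 < b) (hn : n ≠ 0) (hp : 0 ≤ p)
    (h : p ≤ (a / b) ^ n) : b * p ^ (1 / n : ℝ) ≤ a := by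
  rw [mul_comm, ← le_div_iff₀ hb, one_div, ← Real.pow_rpow_inv_natCast (div_nonneg ha hb.le) hn]
  gcongr

end Roots

section CoordSplit

variable {k : ℕ}

/-- Separates the coordinate `j` of a point of `ℝ^(k + 1)` from the remaining `k` coordinates. -/
def coordSplit (j : Fin (k + 1)) : E (k + 1) ≃ᵐ (Fin k → ℝ) × ℝ :=
  (MeasurableEquiv.toLp 2 (Fin (k + 1) → ℝ)).symm.trans
    ((MeasurableEquiv.piFinSuccAbove (fun _ => ℝ) j).trans MeasurableEquiv.prodComm)

lemma coordSplit_apply (j : Fin (k + 1)) (x : E (k + 1)) :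
    coordSplit j x = (fun i => x (j.succAbove i), x j) := rfl

lemma coordSplit_symm_apply (j : Fin (k + 1)) (p : (Fin k → ℝ) × ℝ) :
    (coordSplit j).symm p = WithLp.toLp 2 (j.insertNth p.2 p.1) := rfl

lemma measurePreserving_coordSplit (j : Fin (k + 1)) : MeasurePreserving (coordSplit j) :=
  (EuclideanSpace.volume_preserving_symm_measurableEquiv_toLp (Fin (k + 1))).trans
    ((volume_preserving_piFinSuccAbove (fun _ => ℝ) j).trans Measure.measurePreserving_swap)

end CoordSplit

section LowerBound

/-- Each set of the family is strictly separated by a hyperplane from all the others. -/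
def StrictlySeparated {ι V : Type*} [AddCommGroup V] [Module ℝ V] (C : ι → Set V) : Prop :=
  ∀ i, ∃ (f : V →ₗ[ℝ] ℝ) (b : ℝ), (∀ x ∈ C i, f x < b) ∧ ∀ j ≠ i, ∀ x ∈ C j, b < f x

lemma StrictlySeparated.pairwise_disjoint {ι V : Type*} [AddCommGroup V] [Module ℝ V]
    {C : ι → Set V} (hC : StrictlySeparated C) : Pairwise (Function.onFun Disjoint C) := by
  intro i j hij
  obtain ⟨f, b, hlt, hgt⟩ := hC i
  exact disjoint_left.2 fun x hi hj => (hlt x hi).not_gt (hgt j hij.symm x hj)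

lemma StrictlySeparated.convexPosition_range {d : ℕ} {ι κ : Type*} {C : ι → Set (E d)}
    (hC : StrictlySeparated C) (σ : κ ↪ ι) {x : κ → E d} (hx : ∀ i, x i ∈ C (σ i)) :
    ConvexPosition (range x) := by
  rintro _ ⟨i, rfl⟩ hmem
  obtain ⟨f, b, hlt, hgt⟩ := hC (σ i)
  have hsub : range x \ {x i} ⊆ {y | b < f y} := by
    rintro _ ⟨⟨j, rfl⟩, hj⟩
    exact hgt (σ j) (σ.injective.ne fun h => hj (h ▸ rfl)) _ (hx j)
  exact (hlt _ (hx i)).not_gt (convexHull_min hsub (convex_halfSpace_gt f.isLinear b) hmem)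

lemma factorial_mul_pow_le_pi {Ω ι : Type*} [MeasurableSpace Ω] [Fintype ι] (μ : Measure Ω)
    [SigmaFinite μ] {T : ι → Set Ω} (hT : ∀ i, MeasurableSet (T i))
    (hdisj : Pairwise (Function.onFun Disjoint T)) {q : ENNReal} (hq : ∀ i, q ≤ μ (T i)) {n : ℕ}
    (hn : n ≤ Fintype.card ι) :
    n.factorial * q ^ n ≤
      Measure.pi (fun _ : Fin n => μ) {x | ∃ σ : Fin n ↪ ι, ∀ i, x i ∈ T (σ i)} := by
  have hunion : {x : Fin n → Ω | ∃ σ : Fin n ↪ ι, ∀ i, x i ∈ T (σ i)} =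
      ⋃ σ : Fin n ↪ ι, univ.pi fun i => T (σ i) := by
    ext x; simp
  have hdisj' : Pairwise (Function.onFun Disjoint
      fun σ : Fin n ↪ ι => univ.pi fun i => T (σ i)) := by
    intro σ τ hne
    obtain ⟨i, hi⟩ := DFunLike.ne_iff.1 hne
    exact disjoint_univ_pi.2 ⟨i, hdisj hi⟩
  rw [hunion, measure_iUnion hdisj' fun σ => MeasurableSet.univ_pi fun i => hT _, tsum_fintype]
  calc (n.factorial : ENNReal) * q ^ n ≤ (Fintype.card ι).descFactorial n * q ^ n := by
        gcongr
        rw [Nat.descFactorial_eq_factorial_mul_choose]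
        exact Nat.le_mul_of_pos_right _ (Nat.choose_pos hn)
    _ = ∑ _ : Fin n ↪ ι, ∏ _ : Fin n, q := by
        simp [Fintype.card_embedding_eq]
    _ ≤ ∑ σ : Fin n ↪ ι, Measure.pi (fun _ => μ) (univ.pi fun i => T (σ i)) := by
        gcongr with σ
        rw [Measure.pi_pi]
        gcongr with i
        exact hq _

variable {k : ℕ}

/-- The points of height between `0` and `h` above the paraboloid `x₀ = x₁² + ⋯ + x_k²` whose
projection `(x₁, …, x_k)` lies in the cube of side `2 * a` centred at `y`. -/
def paraboloidCell (y : Fin k → ℝ) (a h : ℝ) : Set (E (k + 1)) :=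
  coordSplit 0 ⁻¹' regionBetween (fun z => ∑ i, z i ^ 2) (fun z => ∑ i, z i ^ 2 + h)
    (Metric.ball y a)

lemma mem_paraboloidCell {y : Fin k → ℝ} {a h : ℝ} (ha : 0 < a) {x : E (k + 1)} :
    x ∈ paraboloidCell y a h ↔ (∀ i : Fin k, |x i.succ - y i| < a) ∧
      ∑ i : Fin k, x i.succ ^ 2 < x 0 ∧ x 0 < ∑ i : Fin k, x i.succ ^ 2 + h := by
  simp [paraboloidCell, regionBetween, coordSplit_apply, dist_pi_lt_iff ha, Real.dist_eq]

lemma measurableSet_paraboloidCell (y : Fin k → ℝ) (a h : ℝ) :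
    MeasurableSet (paraboloidCell y a h) :=
  (coordSplit 0).measurable <| measurableSet_regionBetween (by fun_prop) (by fun_prop)
    measurableSet_ball

lemma volume_paraboloidCell (y : Fin k → ℝ) {a h : ℝ} (ha : 0 < a) :
    volume (paraboloidCell y a h) = ENNReal.ofReal ((2 * a) ^ k * h) := by
  rw [paraboloidCell, (measurePreserving_coordSplit 0).measure_preimage_equiv,
    Measure.volume_eq_prod, volume_regionBetween_eq_lintegral
      (Continuous.aemeasurable (by fun_prop)) (Continuous.aemeasurable (by fun_prop))
      measurableSet_ball]
  simp only [Pi.sub_apply, add_sub_cancel_left, lintegral_const, Measure.restrict_apply_univ]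
  rw [Real.volume_pi_ball _ ha, Fintype.card_fin, mul_comm, ENNReal.ofReal_mul (by positivity)]

/-- The linear part of `x ↦ x₀ - ∑ (2 yᵢ xᵢ - yᵢ²)`, which vanishes on the tangent hyperplane of the
paraboloid `x₀ = x₁² + ⋯ + x_k²` above `y`. -/
def paraboloidTangent (y : Fin k → ℝ) : E (k + 1) →ₗ[ℝ] ℝ :=
  (EuclideanSpace.proj 0 : E (k + 1) →L[ℝ] ℝ) -
    ∑ i, (2 * y i) • (EuclideanSpace.proj i.succ : E (k + 1) →L[ℝ] ℝ)

lemma paraboloidTangent_apply (y : Fin k → ℝ) (x : E (k + 1)) :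
    paraboloidTangent y x =
      x 0 - ∑ i : Fin k, x i.succ ^ 2 + ∑ i : Fin k, (x i.succ - y i) ^ 2 - ∑ i, y i ^ 2 := by
  have hsum : ∑ i : Fin k, (x i.succ - y i) ^ 2 =
      ∑ i : Fin k, x i.succ ^ 2 - ∑ i : Fin k, 2 * y i * x i.succ + ∑ i, y i ^ 2 := by
    rw [← Finset.sum_sub_distrib, ← Finset.sum_add_distrib]
    exact Finset.sum_congr rfl fun i _ => by ring
  have happly : paraboloidTangent y x = x 0 - ∑ i : Fin k, 2 * y i * x i.succ := by
    simp [paraboloidTangent]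
  rw [happly, hsum]
  ring

lemma strictlySeparated_paraboloidCell {ι : Type*} {Y : ι → Fin k → ℝ} {a h δ : ℝ} (ha : 0 < a)
    (haδ : a ≤ δ) (hY : ∀ g g', g ≠ g' → ∃ i, δ ≤ |Y g i - Y g' i|)
    (hsep : k * a ^ 2 + h ≤ (δ - a) ^ 2) :
    StrictlySeparated fun g => paraboloidCell (Y g) a h := by
  refine fun g => ⟨paraboloidTangent (Y g), (δ - a) ^ 2 - ∑ i, Y g i ^ 2, fun x hx => ?_,
    fun g' hne x hx => ?_⟩
  · obtain ⟨hball, -, hupper⟩ := (mem_paraboloidCell ha).1 hx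
    have hsum : ∑ i : Fin k, (x i.succ - Y g i) ^ 2 ≤ k * a ^ 2 := by
      refine (Finset.sum_le_card_nsmul _ _ (a ^ 2) fun i _ => ?_).trans_eq (by simp)
      exact sq_le_sq' (by linarith [(abs_lt.1 (hball i)).1]) (abs_lt.1 (hball i)).2.le
    rw [paraboloidTangent_apply]
    linarith
  · obtain ⟨hball, hlower, -⟩ := (mem_paraboloidCell ha).1 hx
    obtain ⟨i, hi⟩ := hY g g' hne.symm
    have hfar : δ - a ≤ |x i.succ - Y g i| := by
      have := abs_sub_le (Y g i) (x i.succ) (Y g' i)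
      rw [abs_sub_comm (Y g i) (x i.succ)] at this
      linarith [hball i]
    have hsum : (δ - a) ^ 2 ≤ ∑ i : Fin k, (x i.succ - Y g i) ^ 2 := by
      refine le_trans ?_ (Finset.single_le_sum (f := fun i : Fin k => (x i.succ - Y g i) ^ 2)
        (fun i _ => sq_nonneg _) (Finset.mem_univ i))
      rw [← sq_abs (x i.succ - Y g i)]
      exact pow_le_pow_left₀ (by linarith) hfar 2
    rw [paraboloidTangent_apply]
    linarith

lemma paraboloidCell_subset_cornerSimplex {y : Fin k → ℝ} {a h : ℝ} (ha : 0 < a)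
    (hy₀ : ∀ i, a ≤ y i) (hy₁ : ∀ i, y i + a ≤ 1 / (k + 1)) (hh : h ≤ (1 / (k + 1)) ^ 2) :
    paraboloidCell y a h ⊆ cornerSimplex (k + 1) := by
  intro x hx
  obtain ⟨hball, hlower, hupper⟩ := (mem_paraboloidCell ha).1 hx
  have hx₀ (i : Fin k) : 0 ≤ x i.succ := by linarith [(abs_lt.1 (hball i)).1, hy₀ i]
  have hx₁ (i : Fin k) : x i.succ ≤ 1 / (k + 1) := by linarith [(abs_lt.1 (hball i)).2, hy₁ i]
  have hsum : ∑ i : Fin k, x i.succ ≤ k * (1 / (k + 1)) :=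
    (Finset.sum_le_card_nsmul _ _ _ fun i _ => hx₁ i).trans_eq (by simp)
  have hsum_sq : ∑ i : Fin k, x i.succ ^ 2 ≤ k * (1 / (k + 1)) ^ 2 :=
    (Finset.sum_le_card_nsmul _ _ _ fun i _ => pow_le_pow_left₀ (hx₀ i) (hx₁ i) 2).trans_eq
      (by simp)
  have hfirst : 0 ≤ x 0 := (Finset.sum_nonneg fun i _ => sq_nonneg _).trans hlower.le
  have hsq : k * (1 / (k + 1 : ℝ)) ^ 2 + (1 / (k + 1)) ^ 2 = 1 / (k + 1) := by field_simp
  have hone : k * (1 / (k + 1 : ℝ)) + 1 / (k + 1) = 1 := by field_simp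
  refine ⟨Fin.cases hfirst hx₀, ?_⟩
  rw [Fin.sum_univ_succ]
  linarith

lemma exists_strictlySeparated_subset_cornerSimplex {m : ℕ} (hm : m ≠ 0) :
    ∃ C : (Fin k → Fin m) → Set (E (k + 1)), StrictlySeparated C ∧ ∀ g, MeasurableSet (C g) ∧
      C g ⊆ cornerSimplex (k + 1) ∧ volume (C g) =
        ENNReal.ofReal ((1 / (2 * (k + 1) ^ 2)) ^ k / (4 * (k + 1) ^ 2) / m ^ (k + 2)) := by
  have hm₁ : (1 : ℝ) ≤ m := mod_cast Nat.one_le_iff_ne_zero.2 hm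
  set D : ℝ := k + 1 with hD
  have hD₁ : 1 ≤ D := by simp [D]
  set a : ℝ := 1 / (4 * D ^ 2 * m)
  have ha : 0 < a := by positivity
  have haD : a ≤ D * a := le_mul_of_one_le_left ha.le hD₁
  have hma : m * (4 * D * a) = 1 / D := by simp only [a]; field_simp
  have hmono : 4 * D * a ≤ 1 / D := hma ▸ le_mul_of_one_le_left (by positivity) hm₁
  refine ⟨fun g =>
      paraboloidCell (fun i => ((g i : ℕ) + 1 / 2) * (4 * D * a)) a (4 * D ^ 2 * a ^ 2),
    strictlySeparated_paraboloidCell ha (δ := 4 * D * a) (by linarith) (fun g g' hne => ?_) ?_,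
    fun g => ⟨measurableSet_paraboloidCell _ _ _, paraboloidCell_subset_cornerSimplex ha
      (fun i => ?_) (fun i => ?_) ?_, ?_⟩⟩
  · obtain ⟨i, hi⟩ := Function.ne_iff.1 hne
    have hint : 1 ≤ |((g i : ℕ) : ℤ) - (g' i : ℕ)| :=
      Int.one_le_abs (sub_ne_zero.2 (by simpa [Fin.val_inj] using hi))
    refine ⟨i, ?_⟩
    rw [← sub_mul, add_sub_add_right_eq_sub, abs_mul, abs_of_pos (by positivity : 0 < 4 * D * a)]
    exact le_mul_of_one_le_left (by positivity) (mod_cast hint)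
  · have : 0 ≤ a ^ 2 * (12 * k ^ 2 + 15 * k + 5) := by positivity
    rw [hD]
    linarith
  · nlinarith [mul_nonneg (g i).val.cast_nonneg (by positivity : 0 ≤ 4 * D * a)]
  · have : (g i : ℝ) + 1 ≤ m := mod_cast (g i).2
    rw [← hD, ← hma]
    nlinarith [mul_le_mul_of_nonneg_right this (by positivity : 0 ≤ 4 * D * a)]
  · nlinarith [pow_le_pow_left₀ (by positivity) hmono 2, sq_nonneg (D * a)]
  · have hside : 2 * a = 1 / (2 * D ^ 2) / m := by simp only [a]; field_simp; norm_num
    have hheight : 4 * D ^ 2 * a ^ 2 = 1 / (4 * D ^ 2) / m ^ 2 := by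
      simp only [a]; field_simp
    rw [volume_paraboloidCell _ ha, hside, hheight, div_pow, pow_add]
    congr 1
    field_simp

lemma exists_factorial_mul_pow_le_pConvex (k : ℕ) : ∃ c : ℝ, 0 < c ∧ ∀ K : Set (E (k + 1)),
    IsNormalized K → ∀ m n : ℕ, m ≠ 0 → n ≤ m ^ k →
      n.factorial * (c / m ^ (k + 2)) ^ n ≤ pConvex (k + 1) n K := by
  refine ⟨(1 / 2) ^ (k + 1) * ((1 / (2 * (k + 1) ^ 2)) ^ k / (4 * (k + 1) ^ 2)), by positivity,
    fun K hK m n hm hn => ?_⟩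
  obtain ⟨C, hsep, hC⟩ := exists_strictlySeparated_subset_cornerSimplex (k := k) hm
  have hq (g : Fin k → Fin m) : ENNReal.ofReal ((1 / 2) ^ (k + 1) *
      ((1 / (2 * (k + 1) ^ 2)) ^ k / (4 * (k + 1) ^ 2)) / m ^ (k + 2)) ≤
        unifOn (k + 1) K (C g) := by
    refine le_of_eq_of_le ?_ (hK.pow_mul_volume_le_unifOn (hC g).2.1)
    rw [(hC g).2.2, ← ENNReal.ofReal_mul (by positivity), mul_div_assoc]
  have := hK.isProbabilityMeasure_unifOn
  have := hK.isProbabilityMeasure_sampleMeasure (n := n)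
  have hpi := factorial_mul_pow_le_pi (unifOn (k + 1) K) (fun g => (hC g).1)
    hsep.pairwise_disjoint hq (n := n) (by simpa using hn)
  rw [pConvex, ← ENNReal.ofReal_le_iff_le_toReal (measure_ne_top _ _),
    ENNReal.ofReal_mul (by positivity), ENNReal.ofReal_natCast, ENNReal.ofReal_pow (by positivity)]
  exact hpi.trans (measure_mono fun x ⟨σ, hσ⟩ => hsep.convexPosition_range σ hσ)

lemma div_exp_one_pow_le_factorial (n : ℕ) : (n / Real.exp 1) ^ n ≤ n.factorial := by
  have := Real.pow_div_factorial_le_exp (n : ℝ) n.cast_nonneg n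
  rw [div_le_iff₀ (by positivity)] at this
  rwa [div_pow, ← Real.exp_nat_mul, mul_one, div_le_iff₀ (by positivity), mul_comm]

lemma exists_lt_rpow_mul_pConvex_rpow (hk : k ≠ 0) : ∃ c : ℝ, 0 < c ∧
    ∀ K : Set (E (k + 1)), IsNormalized K → ∀ n : ℕ, n ≠ 0 →
      c < (n : ℝ) ^ (2 / k : ℝ) * pConvex (k + 1) n K ^ (1 / n : ℝ) := by
  obtain ⟨c, hc, hbound⟩ := exists_factorial_mul_pow_le_pConvex k
  refine ⟨c / (Real.exp 1 * 2 ^ (k + 2)) / 2, by positivity, fun K hK n hn => ?_⟩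
  obtain ⟨q, hq₁, hqk, hq₂⟩ := exists_one_le_pow_eq_natCast hk hn
  have hq_le : q ≤ ⌈q⌉₊ := Nat.le_ceil q
  have hle_two_mul : (⌈q⌉₊ : ℝ) ≤ 2 * q := by linarith [Nat.ceil_lt_add_one (by linarith : 0 ≤ q)]
  have hceil : ⌈q⌉₊ ≠ 0 := (Nat.ceil_pos.2 (by linarith)).ne'
  have hn_le : n ≤ ⌈q⌉₊ ^ k := by
    have : (n : ℝ) ≤ ⌈q⌉₊ ^ k := by rw [← hqk]; gcongr
    exact_mod_cast this
  have hpow : (c / (Real.exp 1 * 2 ^ (k + 2)) / q ^ 2) ^ n ≤ pConvex (k + 1) n K :=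
    calc (c / (Real.exp 1 * 2 ^ (k + 2)) / q ^ 2) ^ n
        = (n / Real.exp 1) ^ n * (c / (2 * q) ^ (k + 2)) ^ n := by
          rw [← mul_pow, mul_pow 2 q, pow_add q, hqk]
          field_simp
      _ ≤ n.factorial * (c / ⌈q⌉₊ ^ (k + 2)) ^ n := by
          gcongr
          exact div_exp_one_pow_le_factorial n
      _ ≤ pConvex (k + 1) n K := hbound K hK _ n hceil hn_le
  rw [hq₂]
  exact (half_lt_self (by positivity)).trans_le <|
    le_mul_rpow_of_div_pow_le (by positivity) (by positivity) hn hpow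

end LowerBound

section Grid

variable {k m : ℕ}

lemma norm_sq_le_of_mem_cube {d : ℕ} {r : ℝ} {x : E d} (hr : 0 ≤ r) (hx : x ∈ cube d r) :
    ‖x‖ ^ 2 ≤ d * r ^ 2 := by
  rw [EuclideanSpace.norm_sq_eq]
  have := Finset.sum_le_card_nsmul Finset.univ (fun i => ‖x i‖ ^ 2) (r ^ 2) fun i _ =>
    pow_le_pow_left₀ (norm_nonneg _) ((mem_cube hr).1 hx i) 2
  simpa using this

/-- The lines carrying the lattice points of the boundary of `cube (k + 2) 2`: a facet, given by
its coordinate axis and its sign, and the last `k` of the remaining coordinates, counted in steps of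
`1 / m` from `-2`. The first of the remaining coordinates runs along the line. -/
abbrev GridLine (k m : ℕ) : Type :=
  Fin (k + 2) × ℤˣ × (Fin k → Fin (4 * m + 1))

/-- The `a`-th lattice point on a grid line; it lies in `cube (k + 2) 2` for `a ≤ 4 * m`. -/
def gridPoint (l : GridLine k m) (a : ℕ) : E (k + 2) :=
  WithLp.toLp 2 <| l.1.insertNth (2 * (l.2.1 : ℤ) : ℝ) <|
    Fin.cons (-2 + a / m : ℝ) fun i => -2 + l.2.2 i / m

lemma gridPoint_succ (l : GridLine k m) (a : ℕ) :
    gridPoint l (a + 1) =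
      gridPoint l a + EuclideanSpace.single (l.1.succAbove 0) (1 / m : ℝ) := by
  ext i
  cases i using Fin.succAboveCases l.1 with
  | x => simp [gridPoint, (Fin.succAbove_ne _ _).symm]
  | p i =>
    cases i using Fin.cases with
    | zero => simp [gridPoint]; ring
    | succ i => simp [gridPoint]

lemma abs_neg_two_add_div_le {b : ℕ} (hm : m ≠ 0) (hb : b ≤ 4 * m) :
    |(-2 + b / m : ℝ)| ≤ 2 := by
  have hdiv : (b / m : ℝ) ≤ 4 := (div_le_iff₀ (by positivity)).2 (mod_cast hb)
  have hnonneg : (0 : ℝ) ≤ b / m := by positivity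
  exact abs_le.2 ⟨by linarith, by linarith⟩

lemma exists_abs_neg_two_add_div_sub_le (hm : m ≠ 0) {t : ℝ} (ht : |t| ≤ 2) :
    ∃ b : Fin (4 * m + 1), |-2 + b / m - t| ≤ 1 / m := by
  have hm₀ : (0 : ℝ) < m := by positivity
  obtain ⟨hlower, hupper⟩ := abs_le.1 ht
  have hnonneg : 0 ≤ (t + 2) * m := mul_nonneg (by linarith) hm₀.le
  have hb : ⌊(t + 2) * m⌋₊ ≤ 4 * m := Nat.floor_le_of_le (by push_cast; gcongr; linarith)
  refine ⟨⟨⌊(t + 2) * m⌋₊, Nat.lt_succ_of_le hb⟩, ?_⟩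
  rw [show -2 + (⌊(t + 2) * m⌋₊ : ℝ) / m - t = (⌊(t + 2) * m⌋₊ - (t + 2) * m) / m by
    field_simp; ring, abs_div, abs_of_pos hm₀]
  gcongr
  rw [abs_le]
  constructor <;> linarith [Nat.floor_le hnonneg, Nat.lt_floor_add_one ((t + 2) * m)]

lemma gridPoint_mem_cube (hm : m ≠ 0) (l : GridLine k m) {a : ℕ} (ha : a ≤ 4 * m) :
    gridPoint l a ∈ cube (k + 2) 2 := by
  refine (mem_cube zero_le_two).2 fun i => ?_
  cases i using Fin.succAboveCases l.1 with
  | x => rcases Int.units_eq_one_or l.2.1 with h | h <;> simp [gridPoint, h]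
  | p i =>
    cases i using Fin.cases with
    | zero => simpa [gridPoint] using abs_neg_two_add_div_le hm ha
    | succ i => simpa [gridPoint] using abs_neg_two_add_div_le hm (Nat.le_of_lt_succ (l.2.2 i).2)

lemma exists_gridPoint_norm_sub_sq_le (hm : m ≠ 0) {z : E (k + 2)} (hz : ‖z.ofLp‖ = 2) :
    ∃ (l : GridLine k m) (a : ℕ), a ≤ 4 * m ∧ ‖gridPoint l a - z‖ ^ 2 ≤ (k + 2) / m ^ 2 := by
  have hle (i : Fin (k + 2)) : |z i| ≤ 2 := hz ▸ norm_le_pi_norm z.ofLp i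
  obtain ⟨j, hj⟩ : ∃ j, |z j| = 2 := by
    by_contra! hne
    refine hz.not_lt ((pi_norm_lt_iff two_pos).2 fun i => ?_)
    exact (hle i).lt_of_ne (hne i)
  obtain ⟨s, hs⟩ : ∃ s : ℤˣ, z j = 2 * (s : ℤ) := by
    rcases eq_or_eq_neg_of_abs_eq hj with h | h
    exacts [⟨1, by simp [h]⟩, ⟨-1, by simp [h]⟩]
  choose b hb using fun i => exists_abs_neg_two_add_div_sub_le hm (hle i)
  refine ⟨(j, s, fun i => b (j.succAbove i.succ)), b (j.succAbove 0),
    Nat.le_of_lt_succ (b _).2, ?_⟩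
  have hmem : gridPoint (j, s, fun i => b (j.succAbove i.succ)) (b (j.succAbove 0)) - z ∈
      cube (k + 2) (1 / m) := by
    refine (mem_cube (by positivity)).2 fun i => ?_
    cases i using Fin.succAboveCases j with
    | x => simp [gridPoint, hs]
    | p i =>
      cases i using Fin.cases with
      | zero => simpa [gridPoint] using hb (j.succAbove 0)
      | succ i => simpa [gridPoint] using hb (j.succAbove i.succ)
  refine (norm_sq_le_of_mem_cube (by positivity) hmem).trans_eq ?_
  push_cast
  ring

/-- The squared distance from a grid point to `L`, rounded down to a multiple of `1 / m ^ 2` and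
expressed in this unit. -/
def gridValue (L : Set (E (k + 2))) (l : GridLine k m) (a : ℕ) : ℤ :=
  ⌊(m : ℝ) ^ 2 * Metric.infDist (gridPoint l a) L ^ 2⌋

lemma gridValue_mem_Icc (hm : m ≠ 0) {L : Set (E (k + 2))} (hne : L.Nonempty)
    (hL : L ⊆ cube (k + 2) 1) (l : GridLine k m) {a : ℕ} (ha : a ≤ 4 * m) :
    gridValue L l a ∈ Finset.Icc (0 : ℤ) (9 * (k + 2) * m ^ 2) := by
  refine Finset.mem_Icc.2 ⟨Int.floor_nonneg.2 (by positivity), ?_⟩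
  obtain ⟨x, hx⟩ := hne
  have hsub : gridPoint l a - x ∈ cube (k + 2) 3 := (mem_cube zero_le_three).2 fun i => by
    have := abs_sub (gridPoint l a i) (x i)
    have := (mem_cube zero_le_two).1 (gridPoint_mem_cube hm l ha) i
    have := (mem_cube zero_le_one).1 (hL hx) i
    rw [PiLp.sub_apply]
    linarith
  have hdist : Metric.infDist (gridPoint l a) L ^ 2 ≤ (k + 2 : ℝ) * 9 :=
    calc Metric.infDist (gridPoint l a) L ^ 2 ≤ ‖gridPoint l a - x‖ ^ 2 := by
          rw [← dist_eq_norm]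
          exact pow_le_pow_left₀ Metric.infDist_nonneg (Metric.infDist_le_dist_of_mem hx) 2
      _ ≤ (k + 2 : ℝ) * 9 := by
          refine (norm_sq_le_of_mem_cube zero_le_three hsub).trans_eq ?_
          push_cast
          ring
  have hfloor : (gridValue L l a : ℝ) ≤ (9 * (k + 2) * m ^ 2 : ℤ) :=
    (Int.floor_le _).trans <| by push_cast; nlinarith [sq_nonneg (m : ℝ)]
  exact_mod_cast hfloor

lemma floor_sub_two_mul_floor_add_floor_mem_Icc {x y z : ℝ} (h₀ : 0 ≤ x - 2 * y + z)
    (h₂ : x - 2 * y + z ≤ 2) : ⌊x⌋ - 2 * ⌊y⌋ + ⌊z⌋ ∈ Finset.Icc (-1 : ℤ) 3 := by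
  have hx := Int.floor_le x
  have hx' := Int.lt_floor_add_one x
  have hy := Int.floor_le y
  have hy' := Int.lt_floor_add_one y
  have hz := Int.floor_le z
  have hz' := Int.lt_floor_add_one z
  have hlower : ((-2 : ℤ) : ℝ) < (⌊x⌋ - 2 * ⌊y⌋ + ⌊z⌋ : ℤ) := by push_cast; linarith
  have hupper : ((⌊x⌋ - 2 * ⌊y⌋ + ⌊z⌋ : ℤ) : ℝ) < (4 : ℤ) := by push_cast; linarith
  rw [Int.cast_lt] at hlower hupper
  exact Finset.mem_Icc.2 ⟨by omega, by omega⟩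

lemma gridValue_second_difference_mem_Icc (hm : m ≠ 0) {L : Set (E (k + 2))} (hL : Convex ℝ L)
    (l : GridLine k m) (a : ℕ) :
    gridValue L l (a + 2) - 2 * gridValue L l (a + 1) + gridValue L l a ∈
      Finset.Icc (-1 : ℤ) 3 := by
  set h : E (k + 2) := EuclideanSpace.single (l.1.succAbove 0) (1 / m : ℝ)
  have hnext : gridPoint l (a + 2) = gridPoint l (a + 1) + h := gridPoint_succ l (a + 1)
  have hprev : gridPoint l a = gridPoint l (a + 1) - h := by
    rw [gridPoint_succ l a, add_sub_cancel_right]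
  have hnorm : (m : ℝ) ^ 2 * ‖h‖ ^ 2 = 1 := by
    rw [PiLp.norm_single, Real.norm_eq_abs, sq_abs]
    field_simp
  have hlower := mul_le_mul_of_nonneg_left
    (two_mul_infDist_sq_le hL (gridPoint l (a + 1)) h) (sq_nonneg (m : ℝ))
  have hupper := mul_le_mul_of_nonneg_left
    (infDist_sq_add_infDist_sq_le L (gridPoint l (a + 1)) h) (sq_nonneg (m : ℝ))
  simp only [gridValue]
  rw [hnext, hprev]
  apply floor_sub_two_mul_floor_add_floor_mem_Icc <;> linarith

end Grid

section GridCode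

variable {k m : ℕ} {L L' : Set (E (k + 2))}

lemma eq_of_second_difference_eq {f g : ℕ → ℤ} {N : ℕ} (h₀ : f 0 = g 0) (h₁ : f 1 = g 1)
    (h : ∀ a < N, f (a + 2) - 2 * f (a + 1) + f a = g (a + 2) - 2 * g (a + 1) + g a) :
    ∀ a ≤ N, f a = g a := by
  have hpair : ∀ a ≤ N, f a = g a ∧ f (a + 1) = g (a + 1) := fun a ha => by
    induction a with
    | zero => exact ⟨h₀, h₁⟩
    | succ a ih =>
      obtain ⟨hcur, hnext⟩ := ih (by omega)
      exact ⟨hnext, by linarith [h a ha]⟩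
  exact fun a ha => (hpair a ha).1

/-- The data determining `gridValue L` on every grid line: the first two values and the second
differences. As the second differences take boundedly many values, the number of codes is
exponential in `m ^ (k + 1)`, the order of magnitude of the number of grid points, with no
logarithmic factor in the exponent. -/
def gridCode (m : ℕ) (L : Set (E (k + 2))) (l : GridLine k m) : ℤ × ℤ × (Fin (4 * m) → ℤ) :=
  (gridValue L l 0, gridValue L l 1,
    fun a => gridValue L l (a + 2) - 2 * gridValue L l (a + 1) + gridValue L l a)

lemma gridValue_eq_of_gridCode_eq (h : gridCode m L = gridCode m L') (l : GridLine k m) {a : ℕ}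
    (ha : a ≤ 4 * m) : gridValue L l a = gridValue L' l a := by
  have hl := congrFun h l
  simp only [gridCode, Prod.mk.injEq] at hl
  obtain ⟨h₀, h₁, h₂⟩ := hl
  exact eq_of_second_difference_eq h₀ h₁ (fun b hb => congrFun h₂ ⟨b, hb⟩) a ha

/-- A finite set containing the grid codes of the convex bodies in `cube (k + 2) 1`. -/
def gridCodes (k m : ℕ) : Finset (GridLine k m → ℤ × ℤ × (Fin (4 * m) → ℤ)) :=
  Fintype.piFinset fun _ =>
    Finset.Icc 0 (9 * (k + 2) * m ^ 2 : ℤ) ×ˢ Finset.Icc 0 (9 * (k + 2) * m ^ 2 : ℤ) ×ˢ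
      Fintype.piFinset fun _ => Finset.Icc (-1) 3

lemma gridCode_mem_gridCodes (hm : m ≠ 0) (hconvex : Convex ℝ L) (hne : L.Nonempty)
    (hL : L ⊆ cube (k + 2) 1) : gridCode m L ∈ gridCodes k m := by
  simp only [gridCodes, Fintype.mem_piFinset, Finset.mem_product]
  exact fun l => ⟨gridValue_mem_Icc hm hne hL l (by omega),
    gridValue_mem_Icc hm hne hL l (by omega),
    fun a => gridValue_second_difference_mem_Icc hm hconvex l a⟩

lemma card_gridCodes (k m : ℕ) : (gridCodes k m).card =
    ((9 * (k + 2) * m ^ 2 + 1) ^ 2 * 5 ^ (4 * m)) ^ (2 * (k + 2) * (4 * m + 1) ^ k) := by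
  have hIcc : (Finset.Icc 0 (9 * (k + 2) * m ^ 2 : ℤ)).card = 9 * (k + 2) * m ^ 2 + 1 := by
    rw [Int.card_Icc, sub_zero]
    exact Int.toNat_natCast (9 * (k + 2) * m ^ 2 + 1)
  have hIcc' : (Finset.Icc (-1 : ℤ) 3).card = 5 := rfl
  simp only [gridCodes, Fintype.card_piFinset, Finset.card_product, hIcc, hIcc', Finset.prod_const,
    Finset.card_univ, Fintype.card_prod, Fintype.card_pi, Fintype.card_fin,
    Fintype.card_units_int]
  congr 1 <;> ring

lemma exists_card_gridCodes_le (k : ℕ) :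
    ∃ B : ℕ, B ≠ 0 ∧ ∀ m ≠ 0, (gridCodes k m).card ≤ B ^ m ^ (k + 1) := by
  refine ⟨((9 * (k + 2) * 8) ^ 2 * 5 ^ 4) ^ (2 * (k + 2) * 5 ^ k), by positivity, fun m hm => ?_⟩
  have hm₁ : 1 ≤ m := Nat.one_le_iff_ne_zero.2 hm
  have hbase : 9 * (k + 2) * m ^ 2 + 1 ≤ (9 * (k + 2) * 8) ^ m :=
    calc 9 * (k + 2) * m ^ 2 + 1 ≤ 9 * (k + 2) * (2 * m ^ 2) := by nlinarith [sq_nonneg m]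
      _ ≤ (9 * (k + 2)) ^ m * (2 ^ m * (2 ^ m) ^ 2) := by
          gcongr
          · exact Nat.le_self_pow hm _
          · exact Nat.le_self_pow hm _
          · exact Nat.lt_two_pow_self.le
      _ = (9 * (k + 2) * 8) ^ m := by
          rw [mul_pow _ 8, show (8 : ℕ) = 2 * 2 ^ 2 by norm_num, mul_pow 2, pow_right_comm]
  have hexp : (4 * m + 1) ^ k ≤ 5 ^ k * m ^ k := by
    rw [← mul_pow]
    exact Nat.pow_le_pow_left (by omega) k
  calc (gridCodes k m).card
      = ((9 * (k + 2) * m ^ 2 + 1) ^ 2 * 5 ^ (4 * m)) ^ (2 * (k + 2) * (4 * m + 1) ^ k) :=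
        card_gridCodes k m
    _ ≤ (((9 * (k + 2) * 8) ^ m) ^ 2 * 5 ^ (4 * m)) ^ (2 * (k + 2) * (5 ^ k * m ^ k)) := by
        gcongr
        exact Nat.one_le_iff_ne_zero.2 (by positivity)
    _ = (((9 * (k + 2) * 8) ^ 2 * 5 ^ 4) ^ (2 * (k + 2) * 5 ^ k)) ^ m ^ (k + 1) := by
        rw [pow_right_comm, pow_mul 5, ← mul_pow, ← pow_mul, ← pow_mul]
        ring_nf

lemma infDist_le_of_gridCode_eq (hm : 4 * (k + 2) ≤ m ^ 2) (hcomplete : IsComplete L)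
    (hconvex : Convex ℝ L) (hne : L.Nonempty) (hL' : L' ⊆ cube (k + 2) 1)
    (h : gridCode m L = gridCode m L') {y : E (k + 2)} (hy : y ∈ L') :
    Metric.infDist y L ≤ (k + 3) / m ^ 2 := by
  have hm₀ : m ≠ 0 := by rintro rfl; omega
  have hm₂ : (0 : ℝ) < m ^ 2 := by positivity
  have hη : (k + 2) / (m : ℝ) ^ 2 ≤ 1 / 4 := by
    rw [div_le_div_iff₀ hm₂ four_pos, one_mul, mul_comm]
    exact_mod_cast hm
  refine (infDist_le_of_infDist_sq_le (D := {z | ∃ (l : GridLine k m) (a : ℕ), a ≤ 4 * m ∧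
    gridPoint l a = z}) hcomplete hconvex hne (by positivity) hη
    (one_div_nonneg.2 hm₂.le) ?_ ?_).trans_eq (by ring)
  · intro u hu
    have hu₀ : u.ofLp ≠ 0 := fun h₀ => by simp [(WithLp.ofLp_eq_zero 2).1 h₀] at hu
    have hu₁ : ‖u.ofLp‖ ≤ 1 := (pi_norm_le_iff_of_nonneg zero_le_one).2 fun i =>
      hu ▸ PiLp.norm_apply_le u i
    obtain ⟨t, ht, hnorm⟩ := exists_one_le_norm_add_smul_eq zero_le_one
      ((pi_norm_le_iff_of_nonneg zero_le_one).2 ((mem_cube zero_le_one).1 (hL' hy))) hu₀ hu₁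
    obtain ⟨l, a, ha, hnear⟩ := exists_gridPoint_norm_sub_sq_le hm₀ (z := y + t • u)
      (hnorm.trans one_add_one_eq_two)
    exact ⟨t, ht, _, ⟨l, a, ha, rfl⟩, hnear⟩
  · rintro _ ⟨l, a, ha, rfl⟩
    have hfloor := (Int.abs_sub_lt_one_of_floor_eq_floor (gridValue_eq_of_gridCode_eq h l ha))
    have hdist : Metric.infDist (gridPoint l a) L' ^ 2 ≤ ‖gridPoint l a - y‖ ^ 2 := by
      rw [← dist_eq_norm]
      exact pow_le_pow_left₀ Metric.infDist_nonneg (Metric.infDist_le_dist_of_mem hy) 2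
    rw [← mul_sub, abs_lt] at hfloor
    have : Metric.infDist (gridPoint l a) L ^ 2 - Metric.infDist (gridPoint l a) L' ^ 2 ≤
      1 / m ^ 2 := (le_div_iff₀' hm₂).2 hfloor.2.le
    linarith

end GridCode

section Shell

variable {k : ℕ} {S : Set (E (k + 1))}

lemma abs_apply_sub_le_of_mem_closure {j : Fin (k + 1)} {r C : ℝ}
    (h : ∀ x ∈ S, ∀ y ∈ S, |y j - x j| ≤ r + C * ∑ i, |y (j.succAbove i) - x (j.succAbove i)|) :
    ∀ x ∈ closure S, ∀ y ∈ closure S,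
      |y j - x j| ≤ r + C * ∑ i, |y (j.succAbove i) - x (j.succAbove i)| := by
  have hclosed : IsClosed {p : E (k + 1) × E (k + 1) |
      |p.2 j - p.1 j| ≤ r + C * ∑ i, |p.2 (j.succAbove i) - p.1 (j.succAbove i)|} :=
    isClosed_le (by fun_prop) (by fun_prop)
  have hsub := closure_minimal (fun p (hp : p ∈ S ×ˢ S) => h p.1 hp.1 p.2 hp.2) hclosed
  rw [closure_prod_eq] at hsub
  exact fun x hx y hy => hsub (mk_mem_prod hx hy)

lemma volume_le_of_abs_apply_sub_le (hS : S ⊆ cube (k + 1) 1) (j : Fin (k + 1)) {r C : ℝ}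
    (h : ∀ x ∈ S, ∀ y ∈ S, |y j - x j| ≤ r + C * ∑ i, |y (j.succAbove i) - x (j.succAbove i)|) :
    volume S ≤ ENNReal.ofReal (2 ^ k * r) := by
  have hclosure := abs_apply_sub_le_of_mem_closure h
  have hcube : closure S ⊆ cube (k + 1) 1 := closure_minimal hS isClosed_cube
  set P := (coordSplit j).symm ⁻¹' closure S
  have hsection (y : Fin k → ℝ) : volume (Prod.mk y ⁻¹' P) ≤
      (univ.pi fun _ => Icc (-1 : ℝ) 1).indicator (fun _ => ENNReal.ofReal r) y := by
    by_cases hy : y ∈ univ.pi fun _ => Icc (-1 : ℝ) 1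
    · rw [indicator_of_mem hy]
      refine (Real.volume_le_diam _).trans (Metric.ediam_le fun t ht t' ht' => ?_)
      rw [edist_dist]
      refine ENNReal.ofReal_le_ofReal ?_
      simpa [coordSplit_symm_apply, Real.dist_eq] using hclosure _ ht' _ ht
    · rw [indicator_of_notMem hy, nonpos_iff_eq_zero]
      convert measure_empty (μ := volume)
      refine eq_empty_of_forall_notMem fun t ht => hy fun i _ => ?_
      simpa [coordSplit_symm_apply] using
        abs_le.1 ((mem_cube zero_le_one).1 (hcube ht) (j.succAbove i))
  calc volume S ≤ volume (closure S) := measure_mono subset_closure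
    _ = volume P := ((measurePreserving_coordSplit j).symm.measure_preimage_equiv _).symm
    _ = ∫⁻ y, volume (Prod.mk y ⁻¹' P) :=
        Measure.prod_apply ((coordSplit j).symm.measurable isClosed_closure.measurableSet)
    _ ≤ ∫⁻ y, (univ.pi fun _ => Icc (-1 : ℝ) 1).indicator (fun _ => ENNReal.ofReal r) y :=
        lintegral_mono hsection
    _ = ENNReal.ofReal (2 ^ k * r) := by
        rw [lintegral_indicator_const (.univ_pi fun _ => measurableSet_Icc), volume_pi_pi,
          mul_comm, ENNReal.ofReal_mul (by positivity), ENNReal.ofReal_pow zero_le_two]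
        simp only [Real.volume_Icc, Finset.prod_const, Finset.card_univ, Fintype.card_fin]
        norm_num

lemma exists_one_le_mul_sign_mul_apply {u : E (k + 1)} (hu : ‖u‖ = 1) :
    ∃ (j : Fin (k + 1)) (s : ℤˣ), 1 ≤ (k + 1) * ((s : ℤ) * u j) := by
  have hsum : ∑ _j : Fin (k + 1), (1 : ℝ) ≤ ∑ j, (k + 1) * |u j| ^ 2 := by
    have hsq := EuclideanSpace.norm_sq_eq u
    simp only [hu, Real.norm_eq_abs, one_pow] at hsq
    rw [← Finset.mul_sum, ← hsq]
    simp
  obtain ⟨j, -, hj_sq⟩ := Finset.exists_le_of_sum_le Finset.univ_nonempty hsum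
  have hj_le : |u j| ≤ 1 := hu ▸ PiLp.norm_apply_le u j
  have hj : 1 ≤ (k + 1) * |u j| := hj_sq.trans <| by
    gcongr
    exact pow_le_of_le_one (abs_nonneg _) hj_le two_ne_zero
  rcases abs_cases (u j) with ⟨habs, -⟩ | ⟨habs, -⟩
  · exact ⟨j, 1, by simpa [habs] using hj⟩
  · exact ⟨j, -1, by simpa [habs] using hj⟩

lemma sign_mul_apply_le {u v : E (k + 1)} {j : Fin (k + 1)} {s : ℤˣ} {ε : ℝ} (hu : ‖u‖ = 1)
    (huj : 1 ≤ (k + 1) * ((s : ℤ) * u j)) (hε : 0 ≤ ε) (hv : inner ℝ v u ≤ ε) :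
    (s : ℤ) * v j ≤ (k + 1) * (ε + ∑ i, |v (j.succAbove i)|) := by
  have hsplit : inner ℝ v u = u j * v j + ∑ i, u (j.succAbove i) * v (j.succAbove i) := by
    rw [PiLp.inner_apply, Fin.sum_univ_succAbove _ j]
    rfl
  have hsum : -∑ i, |v (j.succAbove i)| ≤ ∑ i, u (j.succAbove i) * v (j.succAbove i) := by
    rw [← Finset.sum_neg_distrib]
    refine Finset.sum_le_sum fun i _ => ?_
    have hui : |u (j.succAbove i)| ≤ 1 := hu ▸ PiLp.norm_apply_le u (j.succAbove i)
    calc -|v (j.succAbove i)| ≤ -(|u (j.succAbove i)| * |v (j.succAbove i)|) := by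
          gcongr
          exact mul_le_of_le_one_left (abs_nonneg _) hui
      _ ≤ u (j.succAbove i) * v (j.succAbove i) := by
          rw [← abs_mul]
          exact neg_abs_le _
  have hsign : ((s : ℤ) * u j) * ((s : ℤ) * v j) = u j * v j := by
    rcases Int.units_eq_one_or s with rfl | rfl <;> simp
  set A := ε + ∑ i, |v (j.succAbove i)|
  have hA : 0 ≤ A := by positivity
  have hprod : ((s : ℤ) * u j) * ((s : ℤ) * v j) ≤ A := by
    rw [hsign]
    linarith
  rcases le_or_gt ((s : ℤ) * v j : ℝ) 0 with hneg | hpos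
  · exact hneg.trans (mul_nonneg (by positivity) hA)
  calc (s : ℤ) * v j ≤ ((k + 1) * ((s : ℤ) * u j)) * ((s : ℤ) * v j) :=
        le_mul_of_one_le_left hpos.le huj
    _ = (k + 1) * (((s : ℤ) * u j) * ((s : ℤ) * v j)) := mul_assoc _ _ _
    _ ≤ (k + 1) * A := by gcongr

-- Near a point whose normal has a large `j`-th coordinate, the hypothesis makes `S` an approximate
-- Lipschitz graph over the other coordinates, of thickness proportional to `ε`.
lemma volume_le_of_exists_inner_sub_le (hS : S ⊆ cube (k + 1) 1) {ε : ℝ} (hε : 0 ≤ ε)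
    (h : ∀ x ∈ S, ∃ u, ‖u‖ = 1 ∧ ∀ y ∈ S, inner ℝ (y - x) u ≤ ε) :
    volume S ≤ ENNReal.ofReal (2 ^ (k + 1) * (k + 1) ^ 2 * ε) := by
  set piece : Fin (k + 1) × ℤˣ → Set (E (k + 1)) := fun p => {x ∈ S | ∃ u, ‖u‖ = 1 ∧
    (1 : ℝ) ≤ (k + 1) * ((p.2 : ℤ) * u p.1) ∧ ∀ y ∈ S, inner ℝ (y - x) u ≤ ε}
  have hcover : S ⊆ ⋃ p, piece p := fun x hx => by
    obtain ⟨u, hu, hxu⟩ := h x hx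
    obtain ⟨j, s, hjs⟩ := exists_one_le_mul_sign_mul_apply hu
    exact mem_iUnion.2 ⟨(j, s), hx, u, hu, hjs, hxu⟩
  have hthin (p : Fin (k + 1) × ℤˣ) (x : E (k + 1)) (hx : x ∈ piece p) (y : E (k + 1))
      (hy : y ∈ piece p) : ((p.2 : ℤ) : ℝ) * (y p.1 - x p.1) ≤
        (k + 1) * ε + (k + 1) * ∑ i, |y (p.1.succAbove i) - x (p.1.succAbove i)| := by
    obtain ⟨-, u, hu, hup, hxu⟩ := hx
    simpa [mul_add] using sign_mul_apply_le hu hup hε (hxu y hy.1)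
  have hvolume (p : Fin (k + 1) × ℤˣ) :
      volume (piece p) ≤ ENNReal.ofReal (2 ^ k * ((k + 1) * ε)) := by
    refine volume_le_of_abs_apply_sub_le ((sep_subset _ _).trans hS) p.1 (C := k + 1)
      fun x hx y hy => ?_
    have hxy := hthin p x hx y hy
    have hyx := hthin p y hy x hx
    simp only [abs_sub_comm (x _) (y _)] at hyx
    rcases Int.units_eq_one_or p.2 with hs | hs <;> simp only [hs] at hxy hyx <;>
      push_cast at hxy hyx <;> exact abs_le.2 ⟨by linarith, by linarith⟩
  calc volume S ≤ ∑ p, volume (piece p) :=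
        (measure_mono hcover).trans (measure_iUnion_fintype_le _ _)
    _ ≤ ∑ _p : Fin (k + 1) × ℤˣ, ENNReal.ofReal (2 ^ k * ((k + 1) * ε)) := by
        gcongr with p
        exact hvolume p
    _ = ENNReal.ofReal (2 ^ (k + 1) * (k + 1) ^ 2 * ε) := by
        rw [Finset.sum_const, nsmul_eq_mul, ← ENNReal.ofReal_natCast,
          ← ENNReal.ofReal_mul (Nat.cast_nonneg _)]
        congr 1
        simp
        ring

end Shell

section UpperBound

lemma pi_le_card_mul_pow {Ω ι κ : Type*} [MeasurableSpace Ω] [Fintype ι] (μ : Measure Ω)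
    [SigmaFinite μ] {A : Set (ι → Ω)} {s : Finset κ} {S : κ → Set Ω} {q : ENNReal}
    (hS : ∀ c ∈ s, μ (S c) ≤ q)
    (hA : ∀ᵐ x ∂Measure.pi fun _ => μ, x ∈ A → ∃ c ∈ s, ∀ i, x i ∈ S c) :
    Measure.pi (fun _ => μ) A ≤ s.card * q ^ Fintype.card ι := by
  calc Measure.pi (fun _ => μ) A
      ≤ Measure.pi (fun _ => μ) (⋃ c ∈ s, univ.pi fun _ => S c) := by
        refine measure_mono_ae ?_
        filter_upwards [hA] with x hx hxA
        obtain ⟨c, hc, hxc⟩ := hx hxA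
        exact mem_biUnion hc fun i _ => hxc i
    _ ≤ ∑ c ∈ s, Measure.pi (fun _ => μ) (univ.pi fun _ => S c) := measure_biUnion_finset_le _ _
    _ ≤ ∑ _c ∈ s, q ^ Fintype.card ι := by
        gcongr with c hc
        rw [Measure.pi_pi, Finset.prod_const, Finset.card_univ]
        gcongr
        exact hS c hc
    _ = s.card * q ^ Fintype.card ι := by rw [Finset.sum_const, nsmul_eq_mul]

lemma IsNormalized.ae_mem_cube {d n : ℕ} {K : Set (E d)} (hK : IsNormalized K) :
    ∀ᵐ x ∂sampleMeasure d n K, ∀ i, x i ∈ cube d 1 := by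
  have := hK.isProbabilityMeasure_unifOn
  have hunif : ∀ᵐ y ∂unifOn d K, y ∈ cube d 1 := Measure.ae_smul_measure
    (ae_restrict_of_ae_restrict_of_subset hK.2 (ae_restrict_mem isClosed_cube.measurableSet)) _
  exact ae_all_iff.2 fun i => Measure.tendsto_eval_ae_ae.eventually hunif

variable {k m : ℕ}

/-- All boundary points of the convex bodies in `cube (k + 2) 1` whose grid code is `c`. -/
def codeShell (c : GridLine k m → ℤ × ℤ × (Fin (4 * m) → ℤ)) : Set (E (k + 2)) :=
  {x | ∃ L : Set (E (k + 2)), IsCompact L ∧ Convex ℝ L ∧ L ⊆ cube (k + 2) 1 ∧ gridCode m L = c ∧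
    x ∈ L ∧ ∃ u, IsOuterUnitNormal L x u}

lemma volume_codeShell_le (hm : 4 * (k + 2) ≤ m ^ 2)
    (c : GridLine k m → ℤ × ℤ × (Fin (4 * m) → ℤ)) :
    volume (codeShell c) ≤ ENNReal.ofReal (2 ^ (k + 2) * (k + 2) ^ 2 * (k + 3) / m ^ 2) := by
  have hcube : codeShell c ⊆ cube (k + 2) 1 := by
    rintro x ⟨L, -, -, hL, -, hx, -⟩
    exact hL hx
  convert volume_le_of_exists_inner_sub_le hcube (ε := (k + 3) / m ^ 2) (by positivity) ?_ using 2
  · push_cast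
    ring
  rintro x ⟨L, hcompact, hconvex, -, hcode, hx, u, hu⟩
  refine ⟨u, hu.1, ?_⟩
  rintro y ⟨L', -, -, hL', hcode', hy, -⟩
  exact (hu.inner_sub_le_infDist ⟨x, hx⟩ y).trans <| infDist_le_of_gridCode_eq hm
    hcompact.isComplete hconvex ⟨x, hx⟩ hL' (hcode.trans hcode'.symm) hy

lemma ConvexPosition.exists_subset_codeShell {X : Set (E (k + 2))} (hX : ConvexPosition X)
    (hm : m ≠ 0) (hfin : X.Finite) (hne : X.Nonempty) (hcube : X ⊆ cube (k + 2) 1) :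
    ∃ c ∈ gridCodes k m, X ⊆ codeShell c := by
  have hsub : convexHull ℝ X ⊆ cube (k + 2) 1 := convexHull_min hcube (convex_cube 1)
  refine ⟨gridCode m (convexHull ℝ X),
    gridCode_mem_gridCodes hm (convex_convexHull ℝ X) hne.convexHull hsub, fun x hx => ?_⟩
  obtain ⟨u, hu⟩ := exists_isOuterUnitNormal_of_notMem_convexHull hfin (hX x hx)
  exact ⟨convexHull ℝ X, hfin.isCompact_convexHull (𝕜 := ℝ), convex_convexHull ℝ X, hsub, rfl,
    subset_convexHull ℝ X hx, u, hu.convexHull⟩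

lemma exists_pConvex_le_pow_mul_pow (k : ℕ) : ∃ B V : ℝ, 1 ≤ B ∧ 0 < V ∧
    ∀ K : Set (E (k + 2)), IsNormalized K → ∀ m n : ℕ, 4 * (k + 2) ≤ m ^ 2 → n ≠ 0 →
      pConvex (k + 2) n K ≤ B ^ m ^ (k + 1) * (V / m ^ 2) ^ n := by
  obtain ⟨B, hB, hcard⟩ := exists_card_gridCodes_le k
  set V : ℝ := (k + 2 : ℕ) ^ (k + 2) * (2 ^ (k + 2) * (k + 2) ^ 2 * (k + 3))
  refine ⟨B, V, mod_cast Nat.one_le_iff_ne_zero.2 hB, by positivity, fun K hK m n hm hn => ?_⟩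
  have := hK.isProbabilityMeasure_unifOn
  have := Fin.pos_iff_nonempty.1 (Nat.pos_of_ne_zero hn)
  have hm₀ : m ≠ 0 := by rintro rfl; omega
  have hshell : ∀ c ∈ gridCodes k m, unifOn (k + 2) K (codeShell c) ≤ ENNReal.ofReal (V / m ^ 2) :=
    fun c _ => calc unifOn (k + 2) K (codeShell c)
      ≤ ENNReal.ofReal ((k + 2 : ℕ) ^ (k + 2)) *
          ENNReal.ofReal (2 ^ (k + 2) * (k + 2) ^ 2 * (k + 3) / m ^ 2) :=
        (hK.unifOn_le_pow_mul_volume _).trans <| by gcongr; exact volume_codeShell_le hm c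
    _ = ENNReal.ofReal (V / m ^ 2) := by
        rw [← ENNReal.ofReal_mul (by positivity), ← mul_div_assoc]
  have hcover : ∀ᵐ x ∂sampleMeasure (k + 2) n K, x ∈ {x | ConvexPosition (range x)} →
      ∃ c ∈ gridCodes k m, ∀ i, x i ∈ codeShell c := by
    filter_upwards [hK.ae_mem_cube] with x hx hconvex
    obtain ⟨c, hc, hxc⟩ := hconvex.exists_subset_codeShell hm₀ (finite_range x)
      (range_nonempty x) (range_subset_iff.2 hx)
    exact ⟨c, hc, range_subset_iff.1 hxc⟩
  refine ENNReal.toReal_le_of_le_ofReal (by positivity) ?_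
  calc sampleMeasure (k + 2) n K {x | ConvexPosition (range x)}
      ≤ (gridCodes k m).card * ENNReal.ofReal (V / (m : ℝ) ^ 2) ^ Fintype.card (Fin n) :=
        pi_le_card_mul_pow _ hshell hcover
    _ ≤ (B ^ m ^ (k + 1) : ℕ) * ENNReal.ofReal (V / (m : ℝ) ^ 2) ^ n := by
        rw [Fintype.card_fin]
        gcongr
        exact hcard m hm₀
    _ = ENNReal.ofReal ((B : ℝ) ^ m ^ (k + 1) * (V / (m : ℝ) ^ 2) ^ n) := by
        rw [ENNReal.ofReal_mul (by positivity), ENNReal.ofReal_pow (by positivity) n,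
          ← Nat.cast_pow B, ENNReal.ofReal_natCast]

lemma exists_rpow_mul_pConvex_rpow_lt (k : ℕ) : ∃ (n₀ : ℕ) (c : ℝ), 0 < n₀ ∧ 0 < c ∧
    ∀ K : Set (E (k + 2)), IsNormalized K → ∀ n : ℕ, n₀ ≤ n →
      (n : ℝ) ^ (2 / (k + 1 : ℕ) : ℝ) * pConvex (k + 2) n K ^ (1 / n : ℝ) < c := by
  obtain ⟨B, V, hB, hV, hbound⟩ := exists_pConvex_le_pow_mul_pow k
  refine ⟨(4 * (k + 2)) ^ (k + 1), 4 * B * V + 1, by positivity, by positivity,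
    fun K hK n hn => ?_⟩
  have hn₀ : n ≠ 0 := (lt_of_lt_of_le (by positivity) hn).ne'
  obtain ⟨q, hq₁, hqk, hq₂⟩ := exists_one_le_pow_eq_natCast k.succ_ne_zero hn₀
  have hq : 0 < q := by linarith
  have hq_ge : ((4 * (k + 2) : ℕ) : ℝ) ≤ q :=
    le_of_pow_le_pow_left₀ k.succ_ne_zero hq.le <| by rw [hqk]; exact_mod_cast hn
  have hfloor_ge : 4 * (k + 2) ≤ ⌊q⌋₊ := Nat.le_floor hq_ge
  have hfloor_le : (⌊q⌋₊ : ℝ) ≤ q := Nat.floor_le hq.le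
  have hhalf_le : q / 2 ≤ ⌊q⌋₊ := by
    have : (1 : ℝ) ≤ ⌊q⌋₊ := mod_cast (by omega : 1 ≤ ⌊q⌋₊)
    linarith [Nat.lt_floor_add_one q]
  have hfloor_pow : ⌊q⌋₊ ^ (k + 1) ≤ n := by
    have : (⌊q⌋₊ : ℝ) ^ (k + 1) ≤ n := by rw [← hqk]; gcongr
    exact_mod_cast this
  have hpow : pConvex (k + 2) n K ≤ (4 * B * V / q ^ 2) ^ n :=
    calc pConvex (k + 2) n K ≤ B ^ ⌊q⌋₊ ^ (k + 1) * (V / ⌊q⌋₊ ^ 2) ^ n :=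
          hbound K hK _ n (hfloor_ge.trans (Nat.le_self_pow two_ne_zero _)) hn₀
      _ ≤ B ^ n * (V / (q / 2) ^ 2) ^ n := by gcongr
      _ = (4 * B * V / q ^ 2) ^ n := by
          rw [← mul_pow]
          field_simp
          norm_num
  rw [hq₂]
  exact (mul_rpow_le_of_le_div_pow (by positivity) (by positivity) hn₀ ENNReal.toReal_nonneg
    hpow).trans_lt (lt_add_one _)

end UpperBound

/-- Theorem 2.1: there are constants `n₀, c₁, c₂ > 0` depending only on `d` such that for
every convex body `K ⊆ ℝ^d` and all `n ≥ n₀`,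
`c₁ < n^{2/(d-1)} · p(n,K)^{1/n} < c₂`. -/
theorem pConvex_asymptotics_high_dim (d : ℕ) (hd : 2 ≤ d) :
    ∃ (n₀ : ℕ) (c₁ c₂ : ℝ), 0 < n₀ ∧ 0 < c₁ ∧ 0 < c₂ ∧
      ∀ (K : Set (E d)), IsCompact K → Convex ℝ K → (interior K).Nonempty →
        ∀ n : ℕ, n₀ ≤ n →
          c₁ < (n : ℝ) ^ ((2 : ℝ) / ((d : ℝ) - 1)) * (pConvex d n K) ^ ((1 : ℝ) / n) ∧
          (n : ℝ) ^ ((2 : ℝ) / ((d : ℝ) - 1)) * (pConvex d n K) ^ ((1 : ℝ) / n) < c₂ := by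
  obtain ⟨k, rfl⟩ : ∃ k, d = k + 2 := Nat.exists_eq_add_of_le' hd
  obtain ⟨c₁, hc₁, hlower⟩ := exists_lt_rpow_mul_pConvex_rpow k.succ_ne_zero
  obtain ⟨n₀, c₂, hn₀, hc₂, hupper⟩ := exists_rpow_mul_pConvex_rpow_lt k
  refine ⟨n₀, c₁, c₂, hn₀, hc₁, hc₂, fun K hK hconvex hint n hn => ?_⟩
  obtain ⟨K', hK', hp⟩ := exists_isNormalized_pConvex_eq hK hconvex hint
  have hexponent : ((k + 2 : ℕ) : ℝ) - 1 = (k + 1 : ℕ) := by push_cast; ring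
  rw [hexponent, ← hp n]
  exact ⟨hlower K' hK' n (hn₀.trans_le hn).ne', hupper K' hK' n hn⟩
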